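/- Let Γ be a planar octilinear drawing of a simple graph G, and let c ∈ ℝ be such that no vertex point and no bend point of Γ has x-coordinate equal to c, and every segment of every polyline of Γ whose image intersects the vertical line x = c is horizontal (direction parallel to (1,0)). Let δ be a positive integer and define φ : points with x-coordinate less than c are fixed, and points with x-coordinate greater than c are translated by (δ,0). Then replacing every vertex point and every polyline point q_i of Γ by its image under φ yields again a planar octilinear drawing of G, in which every edge has the same number of bends as in Γ. -/

import Mathlib

/-!
Common definitions: polylines, octilinear drawings, planarity, triconnectivity.
-/

/-- A polyline: a sequence of `len + 1` points `pt 0, pt 1, …, pt len`,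
consisting of `len ≥ 1` segments. (Values of `pt` beyond `len` are irrelevant.) -/
structure Polyline where
  len : ℕ
  len_pos : 1 ≤ len
  pt : ℕ → ℝ × ℝ

namespace Polyline

/-- The number of bends of a polyline (its interior points `pt 1, …, pt (len-1)`). -/
def bends (P : Polyline) : ℕ := P.len - 1

/-- Piecewise-linear parametrization of the polyline on the interval `[0, len]`. -/
noncomputable def param (P : Polyline) (s : ℝ) : ℝ × ℝ :=
  P.pt ⌊s⌋.toNat + (s - (⌊s⌋.toNat : ℝ)) • (P.pt (⌊s⌋.toNat + 1) - P.pt ⌊s⌋.toNat)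

/-- The image (trace) of the polyline in the plane. -/
noncomputable def image (P : Polyline) : Set (ℝ × ℝ) :=
  P.param '' Set.Icc 0 (P.len : ℝ)

/-- The polyline is a simple curve. -/
def Simple (P : Polyline) : Prop :=
  Set.InjOn P.param (Set.Icc 0 (P.len : ℝ))

/-- Every segment is nondegenerate, and no two consecutive segments are collinear. -/
def Proper (P : Polyline) : Prop :=
  (∀ i < P.len, P.pt i ≠ P.pt (i + 1)) ∧
  (∀ i, i + 1 < P.len → ¬ Collinear ℝ ({P.pt i, P.pt (i + 1), P.pt (i + 2)} : Set (ℝ × ℝ)))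

/-- The segment from `a` to `b` is horizontal, vertical, or diagonal at `45°`. -/
def OctiSeg (a b : ℝ × ℝ) : Prop :=
  b.2 - a.2 = 0 ∨ b.1 - a.1 = 0 ∨ b.2 - a.2 = b.1 - a.1 ∨ b.2 - a.2 = -(b.1 - a.1)

/-- The polyline is octilinear: proper, with all segments in octilinear directions. -/
def Octilinear (P : Polyline) : Prop :=
  P.Proper ∧ ∀ i < P.len, OctiSeg (P.pt i) (P.pt (i + 1))

end Polyline

/-- Embedding of the integer grid into the real plane. -/
def toR (p : ℤ × ℤ) : ℝ × ℝ := ((p.1 : ℝ), (p.2 : ℝ))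

/-- A polyline drawing of a simple graph `G` in the plane:
an injective placement of the vertices and, for each edge, a polyline whose
endpoints are the points of the edge's endvertices, with nondegenerate segments
and no two consecutive segments collinear. -/
structure PolyDrawing {V : Type*} (G : SimpleGraph V) where
  pos : V → ℝ × ℝ
  inj : Function.Injective pos
  poly : Sym2 V → Polyline
  ends : ∀ u v, G.Adj u v →
    ({(poly s(u, v)).pt 0, (poly s(u, v)).pt (poly s(u, v)).len} : Set (ℝ × ℝ)) =
      {pos u, pos v}
  proper : ∀ e ∈ G.edgeSet, (poly e).Proper

/-- A polyline drawing is planar: every edge-polyline is a simple curve meeting the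
vertex points exactly in its two endpoints, and polylines of distinct edges intersect
only in images of common endvertices. -/
def PolyDrawing.IsPlanar {V : Type*} {G : SimpleGraph V} (D : PolyDrawing G) : Prop :=
  (∀ e ∈ G.edgeSet, (D.poly e).Simple) ∧
  (∀ u v, G.Adj u v →
    (D.poly s(u, v)).image ∩ Set.range D.pos = {D.pos u, D.pos v}) ∧
  (∀ e ∈ G.edgeSet, ∀ e' ∈ G.edgeSet, e ≠ e' →
    (D.poly e).image ∩ (D.poly e').image ⊆ D.pos '' {w | w ∈ e ∧ w ∈ e'})

/-- A simple graph is planar if it admits a planar polyline drawing in `ℝ²`. -/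
def GraphPlanar {V : Type*} (G : SimpleGraph V) : Prop :=
  ∃ D : PolyDrawing G, D.IsPlanar

/-- An octilinear drawing of a simple graph `G`: vertices are placed injectively on the
integer grid and each edge is drawn as an octilinear polyline between its endvertices. -/
structure OctiDrawing {V : Type*} (G : SimpleGraph V) where
  pos : V → ℤ × ℤ
  inj : Function.Injective pos
  poly : Sym2 V → Polyline
  ends : ∀ u v, G.Adj u v →
    ({(poly s(u, v)).pt 0, (poly s(u, v)).pt (poly s(u, v)).len} : Set (ℝ × ℝ)) =
      {toR (pos u), toR (pos v)}
  octi : ∀ e ∈ G.edgeSet, (poly e).Octilinear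

/-- An octilinear drawing is planar: every edge-polyline is a simple curve meeting the
vertex points exactly in its two endpoints, and polylines of distinct edges intersect
only in images of common endvertices. -/
def OctiDrawing.IsPlanar {V : Type*} {G : SimpleGraph V} (D : OctiDrawing G) : Prop :=
  (∀ e ∈ G.edgeSet, (D.poly e).Simple) ∧
  (∀ u v, G.Adj u v →
    (D.poly s(u, v)).image ∩ Set.range (fun w => toR (D.pos w)) =
      {toR (D.pos u), toR (D.pos v)}) ∧
  (∀ e ∈ G.edgeSet, ∀ e' ∈ G.edgeSet, e ≠ e' →
    (D.poly e).image ∩ (D.poly e').image ⊆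
      (fun w => toR (D.pos w)) '' {w | w ∈ e ∧ w ∈ e'})

/-- The total number of bends of an octilinear drawing. -/
noncomputable def OctiDrawing.totalBends {V : Type*} [Fintype V] {G : SimpleGraph V}
    (D : OctiDrawing G) : ℕ :=
  ∑ e ∈ G.edgeSet.toFinite.toFinset, (D.poly e).bends

/-- The union of the images of the polylines of a set `S` of edges. -/
noncomputable def edgesImage {V : Type*} {G : SimpleGraph V} (D : OctiDrawing G)
    (S : Set (Sym2 V)) : Set (ℝ × ℝ) :=
  ⋃ e ∈ S, (D.poly e).image

/-- The interior (in the drawing `D`) of the closed curve formed by the edges in `S`: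
the union of the bounded connected components of the complement of the curve. -/
noncomputable def interiorOf {V : Type*} {G : SimpleGraph V} (D : OctiDrawing G)
    (S : Set (Sym2 V)) : Set (ℝ × ℝ) :=
  {z | z ∉ edgesImage D S ∧ Bornology.IsBounded (connectedComponentIn (edgesImage D S)ᶜ z)}

/-- A graph is triconnected if it has at least `4` vertices and deleting
any at most `2` vertices leaves it connected. -/
def Triconnected {V : Type*} [Fintype V] (G : SimpleGraph V) : Prop :=
  4 ≤ Fintype.card V ∧ ∀ S : Set V, S.ncard ≤ 2 → (G.induce Sᶜ).Connected

/-- The maximum degree of `G` is at most `k`. -/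
def MaxDegLE {V : Type*} (G : SimpleGraph V) (k : ℕ) : Prop :=
  ∀ v, (G.neighborSet v).ncard ≤ k

/-- The shift map of a vertical cut at `x = c` by `δ`: points with `x`-coordinate less
than `c` are fixed, all other points are translated by `(δ, 0)`. -/
noncomputable def cutShift (c : ℝ) (δ : ℕ) (z : ℝ × ℝ) : ℝ × ℝ :=
  if z.1 < c then z else (z.1 + δ, z.2)

/-!
The stretching map `cutShift` has the left inverse `collapse`, and off the line `x = c` a point is
the collapse of its stretched image only. A segment of the drawing is either translated as a whole
or horizontal; in both cases `collapse` maps the stretched segment into the original one, in the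
horizontal case because `collapse` is monotone in `x`. Planarity is thus pulled back along
`collapse`: a point common to two stretched polylines collapses to a common point of the original
ones, hence to a vertex, and so is that vertex stretched. Simplicity is inherited too, since two
parameters with the same stretched point must belong to the same segment. A bend of the stretched
polyline could only flatten where a segment crosses the cut; that segment is horizontal, so all
three points would already lie on one horizontal line before stretching.
-/

/-- The collapse map undoing `cutShift`: it fixes points left of `x = c`, projects the strip
`c ≤ x ≤ c + δ` horizontally onto that line, and translates points further right by `(-δ, 0)`. The
formula with `min` and `max` makes it visibly monotone in `x`. -/
noncomputable def collapse (c : ℝ) (δ : ℕ) (z : ℝ × ℝ) : ℝ × ℝ :=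
  (min z.1 (max c (z.1 - δ)), z.2)

namespace Polyline

/-- The condition on a segment from `a` to `b` at the vertical cut `x = c`: both endpoints lie on
the same side of the line, which itself counts as part of the right side as in `cutShift`, or the
segment is horizontal. -/
def CuttableSeg (c : ℝ) (a b : ℝ × ℝ) : Prop :=
  (a.1 < c ↔ b.1 < c) ∨ a.2 = b.2

/-- The polyline whose points are the images under `cutShift` of the points of `P`. -/
noncomputable def shift (c : ℝ) (δ : ℕ) (P : Polyline) : Polyline where
  len := P.len
  len_pos := P.len_pos
  pt i := cutShift c δ (P.pt i)

end Polyline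

open AffineMap Polyline Set

section Collapse

variable {c : ℝ} {δ : ℕ} {a b p q r z : ℝ × ℝ}

lemma collapse_cutShift (c : ℝ) (δ : ℕ) (z : ℝ × ℝ) : collapse c δ (cutShift c δ z) = z := by
  by_cases hz : z.1 < c
  · have hle : z.1 ≤ max c (z.1 - δ) := hz.le.trans (le_max_left _ _)
    simp [cutShift, collapse, hz, hle]
  · simp [cutShift, collapse, hz, not_lt.1 hz]

lemma cutShift_collapse (hz : (collapse c δ z).1 ≠ c) : cutShift c δ (collapse c δ z) = z := by
  rcases lt_or_ge z.1 c with hlt | hge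
  · have hle : z.1 ≤ max c (z.1 - δ) := hlt.le.trans (le_max_left _ _)
    simp [collapse, cutShift, hle, hlt]
  · have hlt : c < z.1 - δ := by
      by_contra! hle
      exact hz (by simp [collapse, hle, hge])
    simp [collapse, cutShift, hlt.le]

lemma cutShift_injective (c : ℝ) (δ : ℕ) : Function.Injective (cutShift c δ) :=
  Function.LeftInverse.injective (collapse_cutShift c δ)

lemma collapse_eq_iff (hp : p.1 ≠ c) : collapse c δ z = p ↔ z = cutShift c δ p := by
  constructor
  · rintro rfl
    exact (cutShift_collapse hp).symm
  · rintro rfl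
    exact collapse_cutShift c δ p

lemma cutShift_snd (c : ℝ) (δ : ℕ) (z : ℝ × ℝ) : (cutShift c δ z).2 = z.2 := by
  unfold cutShift
  split_ifs <;> rfl

lemma cutShift_eq_add (h : a.1 < c ↔ b.1 < c) :
    cutShift c δ b = (cutShift c δ a - a) + b := by
  by_cases hb : b.1 < c
  · simp [cutShift, hb, h.2 hb]
  · ext <;> simp [cutShift, hb, h.not.2 hb, add_comm]

open scoped Pointwise in
lemma image_cutShift_eq_vadd {s : Set (ℝ × ℝ)} (h : ∀ z ∈ s, (a.1 < c ↔ z.1 < c)) :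
    cutShift c δ '' s = (cutShift c δ a - a) +ᵥ s :=
  image_congr fun z hz => cutShift_eq_add (h z hz)

lemma segment_eq_image_mk_of_snd_eq {𝕜 E F : Type*} [Semiring 𝕜] [PartialOrder 𝕜]
    [AddCommMonoid E] [Module 𝕜 E] [AddCommMonoid F] [Module 𝕜 F] {p q : E × F}
    (h : p.2 = q.2) : segment 𝕜 p q = (·, p.2) '' segment 𝕜 p.1 q.1 := by
  rw [Prod.image_mk_segment_left, Prod.mk.eta, h, Prod.mk.eta]

lemma mapsTo_collapse_segment_of_snd_eq (h : a.2 = b.2) :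
    MapsTo (collapse c δ) (segment ℝ (cutShift c δ a) (cutShift c δ b)) (segment ℝ a b) := by
  have hmono : Monotone fun x : ℝ => min x (max c (x - δ)) :=
    monotone_id.min (monotone_const.max fun _ _ hxy => sub_le_sub_right hxy _)
  rw [segment_eq_image_mk_of_snd_eq h,
    segment_eq_image_mk_of_snd_eq (by simpa only [cutShift_snd] using h), cutShift_snd,
    segment_eq_uIcc, segment_eq_uIcc]
  rintro _ ⟨x, hx, rfl⟩
  refine ⟨_, ?_, rfl⟩
  have hcollapse (w : ℝ × ℝ) : min (cutShift c δ w).1 (max c ((cutShift c δ w).1 - δ)) = w.1 :=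
    congrArg Prod.fst (collapse_cutShift c δ w)
  simpa only [hcollapse] using hmono.mapsTo_uIcc hx

lemma fst_lt_iff_of_mem_segment (h : a.1 < c ↔ b.1 < c) (hz : z ∈ segment ℝ a b) :
    a.1 < c ↔ z.1 < c := by
  have hz₁ : z.1 ∈ uIcc a.1 b.1 := segment_eq_uIcc a.1 b.1 ▸ (Prod.segment_subset a b hz).1
  rcases mem_uIcc.1 hz₁ with hab | hba
  · exact ⟨fun ha => hab.2.trans_lt (h.1 ha), hab.1.trans_lt⟩
  · exact ⟨hba.2.trans_lt, fun hz => h.2 (hba.1.trans_lt hz)⟩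

lemma mapsTo_collapse_segment_of_iff (h : a.1 < c ↔ b.1 < c) :
    MapsTo (collapse c δ) (segment ℝ (cutShift c δ a) (cutShift c δ b)) (segment ℝ a b) := by
  have himage : segment ℝ (cutShift c δ a) (cutShift c δ b) = cutShift c δ '' segment ℝ a b := by
    rw [image_cutShift_eq_vadd fun z hz => fst_lt_iff_of_mem_segment h hz, ← image_vadd]
    simp only [vadd_eq_add]
    rw [segment_translate_image, sub_add_cancel, ← cutShift_eq_add h]
  rw [himage]
  rintro _ ⟨z, hz, rfl⟩
  rwa [collapse_cutShift]

namespace Polyline.CuttableSeg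

lemma mapsTo_collapse_segment (h : CuttableSeg c a b) :
    MapsTo (collapse c δ) (segment ℝ (cutShift c δ a) (cutShift c δ b)) (segment ℝ a b) :=
  h.elim mapsTo_collapse_segment_of_iff mapsTo_collapse_segment_of_snd_eq

lemma exists_collapse_lineMap_eq (h : CuttableSeg c a b) (hab : a ≠ b) (hb : b.1 ≠ c) {t : ℝ}
    (ht : t ∈ Ico (0 : ℝ) 1) :
    ∃ u ∈ Ico (0 : ℝ) 1,
      collapse c δ (lineMap (cutShift c δ a) (cutShift c δ b) t) = lineMap a b u := by
  have hmem : collapse c δ (lineMap (cutShift c δ a) (cutShift c δ b) t) ∈ segment ℝ a b :=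
    h.mapsTo_collapse_segment (lineMap_mem_segment ℝ _ _ (Ico_subset_Icc_self ht))
  rw [segment_eq_image_lineMap] at hmem
  obtain ⟨u, hu, hut⟩ := hmem
  refine ⟨u, ⟨hu.1, hu.2.lt_of_ne ?_⟩, hut.symm⟩
  -- If the collapsed point were `b`, the stretched point would already be `cutShift c δ b`.
  rintro rfl
  rw [lineMap_apply_one, eq_comm, collapse_eq_iff hb, lineMap_eq_right_iff] at hut
  exact hut.elim (fun heq => hab (cutShift_injective c δ heq)) ht.2.ne

lemma of_exists_fst_eq_imp (h : (∃ z ∈ segment ℝ a b, z.1 = c) → a.2 = b.2) :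
    CuttableSeg c a b := by
  refine or_iff_not_imp_left.2 fun hside => h ?_
  have himage : fst '' segment ℝ a b = uIcc a.1 b.1 :=
    (image_segment ℝ (fst : (ℝ × ℝ) →ᵃ[ℝ] ℝ) a b).trans (segment_eq_uIcc a.1 b.1)
  have hc : c ∈ uIcc a.1 b.1 := by
    rw [mem_uIcc]
    grind
  rwa [← himage] at hc

lemma octiSeg_cutShift (h : CuttableSeg c a b) (ho : OctiSeg a b) :
    OctiSeg (cutShift c δ a) (cutShift c δ b) := by
  rcases h with hside | hhor
  · have hsub : cutShift c δ b - cutShift c δ a = b - a := by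
      rw [cutShift_eq_add hside]
      abel
    simp only [OctiSeg, ← Prod.fst_sub, ← Prod.snd_sub] at ho ⊢
    rwa [hsub]
  · exact Or.inl (by rw [cutShift_snd, cutShift_snd, hhor, sub_self])

end Polyline.CuttableSeg

lemma collinear_of_forall_snd_eq {k : Type*} [DivisionRing k] {s : Set (k × k)} {y : k}
    (h : ∀ p ∈ s, p.2 = y) : Collinear k s :=
  (collinear_iff_exists_forall_eq_smul_vadd s).2
    ⟨(0, y), (1, 0), fun p hp => ⟨p.1, by ext <;> simp [h p hp]⟩⟩

lemma affineMap_eq_of_collinear {k V W P Q : Type*} [DivisionRing k] [AddCommGroup V] [Module k V]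
    [AddTorsor V P] [AddCommGroup W] [Module k W] [AddTorsor W Q] (f : P →ᵃ[k] Q) {s : Set P}
    (hs : Collinear k s) {p q r : P} (hp : p ∈ s) (hq : q ∈ s) (hr : r ∈ s) (hpq : p ≠ q)
    (hf : f p = f q) : f r = f p := by
  obtain ⟨t, rfl⟩ := mem_affineSpan_pair_iff_exists_lineMap_eq.1
    (hs.mem_affineSpan_of_mem_of_ne hp hq hr hpq)
  rw [apply_lineMap, ← hf, lineMap_same_apply]

lemma collinear_of_image_cutShift_of_snd_eq {s : Set (ℝ × ℝ)}
    (h : Collinear ℝ (cutShift c δ '' s)) (ha : a ∈ s) (hb : b ∈ s) (hne : a ≠ b)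
    (hab : a.2 = b.2) : Collinear ℝ s := by
  refine collinear_of_forall_snd_eq (y := a.2) fun x hx => ?_
  have heq := affineMap_eq_of_collinear (snd : (ℝ × ℝ) →ᵃ[ℝ] ℝ) h (mem_image_of_mem _ ha)
    (mem_image_of_mem _ hb) (mem_image_of_mem _ hx) ((cutShift_injective c δ).ne hne)
    (by simpa only [coe_snd, cutShift_snd] using hab)
  simpa only [coe_snd, cutShift_snd] using heq

lemma collinear_triple_of_image_cutShift (hpq : CuttableSeg c p q) (hqr : CuttableSeg c q r)
    (hpq_ne : p ≠ q) (hqr_ne : q ≠ r) (h : Collinear ℝ (cutShift c δ '' {p, q, r})) :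
    Collinear ℝ {p, q, r} := by
  rcases hpq with hpq | hpq
  · rcases hqr with hqr | hqr
    · have hside : ∀ z ∈ ({p, q, r} : Set (ℝ × ℝ)), (p.1 < c ↔ z.1 < c) := by
        rintro z (rfl | rfl | rfl)
        exacts [Iff.rfl, hpq, hpq.trans hqr]
      rwa [Collinear, image_cutShift_eq_vadd hside, vectorSpan_vadd] at h
    · exact collinear_of_image_cutShift_of_snd_eq h (by simp) (by simp) hqr_ne hqr
  · exact collinear_of_image_cutShift_of_snd_eq h (by simp) (by simp) hpq_ne hpq

end Collapse

namespace Polyline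

variable {c : ℝ} {δ : ℕ} {P : Polyline}

lemma Proper.shift (hP : P.Proper) (hseg : ∀ i < P.len, CuttableSeg c (P.pt i) (P.pt (i + 1))) :
    (P.shift c δ).Proper := by
  obtain ⟨hne, hcol⟩ := hP
  refine ⟨fun i hi => (cutShift_injective c δ).ne (hne i hi), fun i hi hshift => ?_⟩
  have hi' : i < P.len := i.lt_succ_self.trans hi
  refine hcol i hi (collinear_triple_of_image_cutShift (δ := δ) (hseg i hi') (hseg (i + 1) hi)
    (hne i hi') (hne (i + 1) hi) ?_)
  simpa only [image_insert_eq, image_singleton, Polyline.shift] using hshift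

lemma Octilinear.shift (ho : P.Octilinear)
    (hseg : ∀ i < P.len, CuttableSeg c (P.pt i) (P.pt (i + 1))) : (P.shift c δ).Octilinear :=
  ⟨ho.1.shift hseg, fun i hi => (hseg i hi).octiSeg_cutShift (ho.2 i hi)⟩

lemma param_eq_lineMap (P : Polyline) (s : ℝ) :
    P.param s = lineMap (P.pt ⌊s⌋₊) (P.pt (⌊s⌋₊ + 1)) (s - ⌊s⌋₊) := by
  rw [param, Int.floor_toNat, lineMap_apply_module', add_comm]

lemma param_natCast (P : Polyline) (i : ℕ) : P.param i = P.pt i := by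
  simp [param_eq_lineMap]

lemma pt_mem_image (P : Polyline) {i : ℕ} (hi : i ≤ P.len) : P.pt i ∈ P.image :=
  ⟨i, ⟨i.cast_nonneg, Nat.cast_le.2 hi⟩, P.param_natCast i⟩

lemma eq_natCast_or_floor_lt {n : ℕ} {s : ℝ} (hs : s ∈ Icc (0 : ℝ) n) : s = n ∨ ⌊s⌋₊ < n :=
  hs.2.eq_or_lt.imp_right (Nat.floor_lt hs.1).2

lemma Proper.eq_of_floor_eq (hP : P.Proper) {s t : ℝ} (hs : s ∈ Icc (0 : ℝ) P.len)
    (ht : t ∈ Icc (0 : ℝ) P.len) (hfloor : ⌊s⌋₊ = ⌊t⌋₊) (h : P.param s = P.param t) : s = t := by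
  rcases eq_natCast_or_floor_lt hs with rfl | hlt
  · rw [Nat.floor_natCast] at hfloor
    exact le_antisymm (hfloor ▸ Nat.floor_le ht.1) ht.2
  · rw [param_eq_lineMap, param_eq_lineMap, ← hfloor] at h
    exact sub_left_injective (lineMap_injective ℝ (hP.1 _ hlt) h)

lemma exists_collapse_param_eq (hP : P.Proper) (hpts : ∀ i ≤ P.len, (P.pt i).1 ≠ c)
    (hseg : ∀ i < P.len, CuttableSeg c (P.pt i) (P.pt (i + 1))) {s : ℝ}
    (hs : s ∈ Icc (0 : ℝ) P.len) :
    ∃ t ∈ Icc (0 : ℝ) P.len, ⌊t⌋₊ = ⌊s⌋₊ ∧ collapse c δ ((P.shift c δ).param s) = P.param t := by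
  rcases eq_natCast_or_floor_lt hs with rfl | hlt
  · exact ⟨P.len, hs, rfl, by rw [param_natCast, param_natCast]; exact collapse_cutShift c δ _⟩
  · obtain ⟨u, ⟨hu₀, hu₁⟩, hu⟩ := (hseg _ hlt).exists_collapse_lineMap_eq (δ := δ) (hP.1 _ hlt)
      (hpts _ hlt) ⟨Nat.zero_le_self_sub_floor hs.1, Nat.self_sub_floor_lt_one s⟩
    have hfloor : ⌊u + ⌊s⌋₊⌋₊ = ⌊s⌋₊ := by
      rw [Nat.floor_add_natCast hu₀, Nat.floor_eq_zero.2 hu₁, zero_add]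
    have hlen : (⌊s⌋₊ : ℝ) + 1 ≤ P.len := mod_cast hlt
    refine ⟨u + ⌊s⌋₊, ⟨by positivity, by linarith⟩, hfloor, ?_⟩
    rw [param_eq_lineMap, param_eq_lineMap, hfloor, add_sub_cancel_right]
    exact hu

lemma mapsTo_collapse_image (hP : P.Proper) (hpts : ∀ i ≤ P.len, (P.pt i).1 ≠ c)
    (hseg : ∀ i < P.len, CuttableSeg c (P.pt i) (P.pt (i + 1))) :
    MapsTo (collapse c δ) (P.shift c δ).image P.image := by
  rintro _ ⟨s, hs, rfl⟩
  obtain ⟨t, ht, -, hst⟩ := exists_collapse_param_eq hP hpts hseg hs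
  exact ⟨t, ht, hst.symm⟩

lemma Simple.shift (h : P.Simple) (hP : P.Proper) (hpts : ∀ i ≤ P.len, (P.pt i).1 ≠ c)
    (hseg : ∀ i < P.len, CuttableSeg c (P.pt i) (P.pt (i + 1))) : (P.shift c δ).Simple := by
  intro s hs t ht hst
  obtain ⟨s', hs', hsfloor, hs_eq⟩ := exists_collapse_param_eq (δ := δ) hP hpts hseg hs
  obtain ⟨t', ht', htfloor, ht_eq⟩ := exists_collapse_param_eq (δ := δ) hP hpts hseg ht
  have heq : s' = t' := h hs' ht' (by rw [← hs_eq, ← ht_eq, hst])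
  exact (hP.shift hseg).eq_of_floor_eq hs ht (by rw [← hsfloor, ← htfloor, heq]) hst

end Polyline

/-- The counterpart of `cutShift` on the integer grid. -/
noncomputable def gridShift (c : ℝ) (δ : ℕ) (p : ℤ × ℤ) : ℤ × ℤ :=
  if (p.1 : ℝ) < c then p else (p.1 + δ, p.2)

lemma toR_gridShift (c : ℝ) (δ : ℕ) (p : ℤ × ℤ) :
    toR (gridShift c δ p) = cutShift c δ (toR p) := by
  by_cases hp : (p.1 : ℝ) < c <;> simp [gridShift, cutShift, toR, hp]

lemma toR_injective : Function.Injective toR :=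
  Int.cast_injective.prodMap Int.cast_injective

lemma gridShift_injective (c : ℝ) (δ : ℕ) : Function.Injective (gridShift c δ) := fun p q h =>
  toR_injective (cutShift_injective c δ (by rw [← toR_gridShift, ← toR_gridShift, h]))

namespace OctiDrawing

variable {V : Type*} {G : SimpleGraph V} {D : OctiDrawing G} {c : ℝ} {δ : ℕ} {e e' : Sym2 V}
  {u v w : V} {z : ℝ × ℝ}

/-- The drawing is cut by the line `x = c` only in the interior of horizontal segments. Unlike
`CuttableSeg`, this also keeps the vertices and the points of the polylines off the line. -/
structure Cuttable (D : OctiDrawing G) (c : ℝ) : Prop where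
  pos_ne (v : V) : ((D.pos v).1 : ℝ) ≠ c
  pt_ne : ∀ e ∈ G.edgeSet, ∀ i ≤ (D.poly e).len, ((D.poly e).pt i).1 ≠ c
  seg : ∀ e ∈ G.edgeSet, ∀ i < (D.poly e).len,
    CuttableSeg c ((D.poly e).pt i) ((D.poly e).pt (i + 1))

/-- The drawing obtained by applying `cutShift` to all vertex points and all polyline points. -/
noncomputable def shift (D : OctiDrawing G) (δ : ℕ) (hc : D.Cuttable c) : OctiDrawing G where
  pos v := gridShift c δ (D.pos v)
  inj := (gridShift_injective c δ).comp D.inj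
  poly e := (D.poly e).shift c δ
  ends u v huv := by
    have himage := congrArg (cutShift c δ '' ·) (D.ends u v huv)
    simpa only [image_pair, toR_gridShift, Polyline.shift] using himage
  octi e he := (D.octi e he).shift (hc.seg e he)

lemma endpoints_subset_image_inter_range (D : OctiDrawing G) (huv : G.Adj u v) :
    {toR (D.pos u), toR (D.pos v)} ⊆ (D.poly s(u, v)).image ∩ range fun w => toR (D.pos w) := by
  refine subset_inter ?_ (pair_subset (mem_range_self u) (mem_range_self v))
  rw [← D.ends u v huv]
  exact pair_subset (pt_mem_image _ (Nat.zero_le _)) (pt_mem_image _ le_rfl)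

namespace Cuttable

lemma collapse_eq_pos_iff (hc : D.Cuttable c) :
    collapse c δ z = toR (D.pos w) ↔ z = toR ((D.shift δ hc).pos w) :=
  (collapse_eq_iff (hc.pos_ne w)).trans (by rw [← toR_gridShift]; rfl)

lemma mapsTo_collapse_image (hc : D.Cuttable c) (he : e ∈ G.edgeSet) :
    MapsTo (collapse c δ) ((D.shift δ hc).poly e).image (D.poly e).image :=
  Polyline.mapsTo_collapse_image (D.octi e he).1 (hc.pt_ne e he) (hc.seg e he)

lemma image_inter_range_pos (hc : D.Cuttable c) (huv : G.Adj u v)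
    (h : (D.poly s(u, v)).image ∩ range (fun w => toR (D.pos w)) =
      {toR (D.pos u), toR (D.pos v)}) :
    ((D.shift δ hc).poly s(u, v)).image ∩ range (fun w => toR ((D.shift δ hc).pos w)) =
      {toR ((D.shift δ hc).pos u), toR ((D.shift δ hc).pos v)} := by
  refine Subset.antisymm ?_ (endpoints_subset_image_inter_range _ huv)
  rintro z ⟨hz, w, hw⟩
  have hcollapse : collapse c δ z ∈ ({toR (D.pos u), toR (D.pos v)} : Set (ℝ × ℝ)) :=
    h ▸ ⟨hc.mapsTo_collapse_image huv hz, w, (hc.collapse_eq_pos_iff.2 hw.symm).symm⟩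
  exact hcollapse.imp hc.collapse_eq_pos_iff.1 hc.collapse_eq_pos_iff.1

lemma image_inter_image_subset (hc : D.Cuttable c) (he : e ∈ G.edgeSet) (he' : e' ∈ G.edgeSet)
    {W : Set V} (h : (D.poly e).image ∩ (D.poly e').image ⊆ (fun w => toR (D.pos w)) '' W) :
    ((D.shift δ hc).poly e).image ∩ ((D.shift δ hc).poly e').image ⊆
      (fun w => toR ((D.shift δ hc).pos w)) '' W := by
  rintro z ⟨hz, hz'⟩
  obtain ⟨w, hw, hwz⟩ := h ⟨hc.mapsTo_collapse_image he hz, hc.mapsTo_collapse_image he' hz'⟩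
  exact ⟨w, hw, (hc.collapse_eq_pos_iff.1 hwz.symm).symm⟩

end Cuttable

lemma IsPlanar.shift (hD : D.IsPlanar) (hc : D.Cuttable c) : (D.shift δ hc).IsPlanar :=
  ⟨fun e he => (hD.1 e he).shift (D.octi e he).1 (hc.pt_ne e he) (hc.seg e he),
    fun u v huv => hc.image_inter_range_pos huv (hD.2.1 u v huv),
    fun e he e' he' hne => hc.image_inter_image_subset he he' (hD.2.2 e he e' he' hne)⟩

end OctiDrawing

/-- **vertical cut.** Let `D` be a planar octilinear drawing of `G` and
`c : ℝ` such that no vertex point and no bend point has `x`-coordinate `c`, and every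
segment whose image meets the vertical line `x = c` is horizontal. Then, for any positive
integer `δ`, applying the cut-shift map to every vertex point and every polyline point
yields again a planar octilinear drawing of `G` in which every edge has the same number
of bends as in `D`. -/
theorem vertical_cut_stretch {V : Type*} {G : SimpleGraph V}
    (D : OctiDrawing G) (hD : D.IsPlanar) (c : ℝ)
    (hvert : ∀ v : V, ((D.pos v).1 : ℝ) ≠ c)
    (hpts : ∀ e ∈ G.edgeSet, ∀ i ≤ (D.poly e).len, ((D.poly e).pt i).1 ≠ c)
    (hhor : ∀ e ∈ G.edgeSet, ∀ i < (D.poly e).len,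
      (∃ z ∈ segment ℝ ((D.poly e).pt i) ((D.poly e).pt (i + 1)), z.1 = c) →
      ((D.poly e).pt i).2 = ((D.poly e).pt (i + 1)).2)
    (δ : ℕ) (hδ : 0 < δ) :
    ∃ D' : OctiDrawing G, D'.IsPlanar ∧
      (∀ v : V, toR (D'.pos v) = cutShift c δ (toR (D.pos v))) ∧
      (∀ e ∈ G.edgeSet, (D'.poly e).len = (D.poly e).len ∧ (D'.poly e).bends = (D.poly e).bends ∧
        ∀ i ≤ (D.poly e).len, (D'.poly e).pt i = cutShift c δ ((D.poly e).pt i)) := by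
  have hc : D.Cuttable c :=
    ⟨hvert, hpts, fun e he i hi => .of_exists_fst_eq_imp (hhor e he i hi)⟩
  exact ⟨D.shift δ hc, hD.shift hc, fun v => toR_gridShift c δ (D.pos v),
    fun e _ => ⟨rfl, rfl, fun i _ => rfl⟩⟩
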